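/- arXiv:1306.0852 — 2 statements merged into one kernel-verified Lean document; each statement's English description precedes it below -/
import Mathlib

section
/- Let f, g : [0,∞) → [0,∞) with f·g Lebesgue integrable on [a,b], where 0 < a < b < ∞. If f and g are both (1,1)-GA-convex on [0,b] (i.e. GA-convex), then ∫_a^b f(x)·g(x) dx ≤ (1/(ln b − ln a)) · { [2·L(a,b) − a·(ln b − ln a) − 2a]·f(a)·g(a) + [a + b − 2·L(a,b)]·[f(a)·g(b) + f(b)·g(a)] + [2·L(a,b) + b·(ln b − ln a) − 2b]·f(b)·g(b) }. -/
open Real MeasureTheory Set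

/-- The logarithmic mean `L(x,y) = (y - x)/(ln y - ln x)`. -/
noncomputable def L (x y : ℝ) : ℝ := (y - x) / (Real.log y - Real.log x)

/-- `G(α,ℓ) = ∫_0^1 t^α a^{ℓ(1-t)} b^{ℓ t} dt` (for parameters `a, b`). -/
noncomputable def G (a b α ℓ : ℝ) : ℝ :=
  ∫ t in (0:ℝ)..1, t ^ α * a ^ (ℓ * (1 - t)) * b ^ (ℓ * t)

/-- A function `h` is `(α,m)`-GA-convex on `[0,c]` if
`h(x^λ y^{m(1-λ)}) ≤ λ^α h(x) + m(1-λ^α) h(y)` for all `x, y ∈ [0,c]`, `λ ∈ [0,1]`. -/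
def GAConvexOn (α m c : ℝ) (h : ℝ → ℝ) : Prop :=
  ∀ x ∈ Icc (0:ℝ) c, ∀ y ∈ Icc (0:ℝ) c, ∀ l ∈ Icc (0:ℝ) 1,
    h (x ^ l * y ^ (m * (1 - l))) ≤ l ^ α * h x + m * (1 - l ^ α) * h y

/-- A function `h` is `(α,m)`-GA-concave on `[0,c]` if
`h(x^λ y^{m(1-λ)}) ≥ λ^α h(x) + m(1-λ^α) h(y)` for all `x, y ∈ [0,c]`, `λ ∈ [0,1]`. -/
def GAConcaveOn (α m c : ℝ) (h : ℝ → ℝ) : Prop :=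
  ∀ x ∈ Icc (0:ℝ) c, ∀ y ∈ Icc (0:ℝ) c, ∀ l ∈ Icc (0:ℝ) 1,
    l ^ α * h x + m * (1 - l ^ α) * h y ≤ h (x ^ l * y ^ (m * (1 - l)))

/-!
On the positive reals, `h` is GA-convex exactly when `h ∘ exp` is convex, so on `[a, b]` it lies
below the function affine in `log x` that agrees with it at `a` and `b`. As `f` and `g` are
nonnegative, `f * g` lies below the product of two such functions, a combination of the products
`(log x - c) * (log x - d)` with `c, d ∈ {log a, log b}`. With `u = log x - c` and `v = log x - d`,
an antiderivative of `u * v` is `x * (u * v - u - v + 2)`, because `x * u' = x * v' = 1`.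
-/

section LogInterp

variable {a b : ℝ}

/-- The function affine in `log x` that takes the value `p` at `a` and `q` at `b`. It plays the role
of the chord over `[a, b]` for functions that are convex in the variable `log x`. -/
noncomputable def logInterp (a b p q x : ℝ) : ℝ :=
  ((log b - log x) * p + (log x - log a) * q) / (log b - log a)

theorem intervalIntegrable_log_sub_mul_log_sub (h : (0 : ℝ) ∉ uIcc a b) (c d : ℝ) :
    IntervalIntegrable (fun x => (log x - c) * (log x - d)) volume a b := by
  have hlog : ContinuousOn log (uIcc a b) := continuousOn_log.mono (subset_compl_singleton_iff.2 h)
  exact ((hlog.sub continuousOn_const).mul (hlog.sub continuousOn_const)).intervalIntegrable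

theorem integral_log_sub_mul_log_sub (h : (0 : ℝ) ∉ uIcc a b) (c d : ℝ) :
    ∫ x in a..b, (log x - c) * (log x - d) =
      b * ((log b - c) * (log b - d) - (log b - c) - (log b - d) + 2) -
        a * ((log a - c) * (log a - d) - (log a - c) - (log a - d) + 2) := by
  refine intervalIntegral.integral_eq_sub_of_hasDerivAt
    (f := fun x => x * ((log x - c) * (log x - d) - (log x - c) - (log x - d) + 2))
    (fun x hx => ?_) (intervalIntegrable_log_sub_mul_log_sub h c d)
  have hx0 : x ≠ 0 := ne_of_mem_of_not_mem hx h
  have hc := (hasDerivAt_log hx0).sub_const c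
  have hd := (hasDerivAt_log hx0).sub_const d
  refine ((hasDerivAt_id' x).mul ((((hc.mul hd).sub hc).sub hd).add_const 2)).congr_deriv ?_
  simp only [Pi.sub_apply, Pi.mul_apply]
  field_simp
  ring

theorem logInterp_mul_logInterp (a b p q r s x : ℝ) :
    logInterp a b p q x * logInterp a b r s x =
      p * r / (log b - log a) ^ 2 * ((log x - log b) * (log x - log b)) -
        (p * s + q * r) / (log b - log a) ^ 2 * ((log x - log a) * (log x - log b)) +
        q * s / (log b - log a) ^ 2 * ((log x - log a) * (log x - log a)) := by
  rw [logInterp, logInterp, div_mul_div_comm, ← pow_two]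
  ring

theorem intervalIntegrable_logInterp_mul_logInterp (h : (0 : ℝ) ∉ uIcc a b)
    (p q r s : ℝ) :
    IntervalIntegrable (fun x => logInterp a b p q x * logInterp a b r s x) volume a b := by
  have hint (c d k : ℝ) := (intervalIntegrable_log_sub_mul_log_sub h c d).const_mul k
  simpa only [logInterp_mul_logInterp] using ((hint _ _ _).sub (hint _ _ _)).add (hint _ _ _)

theorem integral_logInterp_mul_logInterp (h : (0 : ℝ) ∉ uIcc a b)
    (hlog : log a ≠ log b) (p q r s : ℝ) :
    ∫ x in a..b, logInterp a b p q x * logInterp a b r s x =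
      (1 / (log b - log a)) *
        ((2 * L a b - a * (log b - log a) - 2 * a) * p * r +
          (a + b - 2 * L a b) * (p * s + q * r) +
          (2 * L a b + b * (log b - log a) - 2 * b) * q * s) := by
  have hint (c d k : ℝ) := (intervalIntegrable_log_sub_mul_log_sub h c d).const_mul k
  have hD : log b - log a ≠ 0 := sub_ne_zero.2 hlog.symm
  simp only [logInterp_mul_logInterp]
  rw [intervalIntegral.integral_add ((hint _ _ _).sub (hint _ _ _)) (hint _ _ _),
    intervalIntegral.integral_sub (hint _ _ _) (hint _ _ _)]
  simp only [intervalIntegral.integral_const_mul, integral_log_sub_mul_log_sub h, L]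
  field_simp
  ring

end LogInterp

section ConvexOnCompExp

variable {f g : ℝ → ℝ} {a b : ℝ}

theorem le_logInterp_of_convexOn_comp_exp {x : ℝ} (ha : 0 < a) (hab : a < b)
    (hf : ConvexOn ℝ (Icc (log a) (log b)) (f ∘ exp)) (hx : x ∈ Icc a b) :
    f x ≤ logInterp a b (f a) (f b) x := by
  have hb : 0 < b := ha.trans hab
  have hx0 : 0 < x := ha.trans_le hx.1
  have hlog : log a < log b := log_lt_log ha hab
  have hD : 0 < log b - log a := sub_pos.2 hlog
  have hax : 0 ≤ log x - log a := sub_nonneg.2 (log_le_log ha hx.1)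
  have hxb : 0 ≤ log b - log x := sub_nonneg.2 (log_le_log hx0 hx.2)
  have hcomb : (log b - log x) / (log b - log a) * log a +
      (log x - log a) / (log b - log a) * log b = log x := by
    field_simp
    ring
  have hconv := hf.2 (left_mem_Icc.2 hlog.le) (right_mem_Icc.2 hlog.le)
    (div_nonneg hxb hD.le) (div_nonneg hax hD.le) (by field_simp; ring)
  simp only [smul_eq_mul, hcomb, Function.comp_apply, exp_log ha, exp_log hb, exp_log hx0] at hconv
  calc f x ≤ _ := hconv
    _ = logInterp a b (f a) (f b) x := by
      unfold logInterp
      ring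

theorem continuousOn_Ioo_of_convexOn_comp_exp (ha : 0 < a)
    (hf : ConvexOn ℝ (Icc (log a) (log b)) (f ∘ exp)) : ContinuousOn f (Ioo a b) := by
  have hpos : ∀ x ∈ Ioo a b, 0 < x := fun x hx => ha.trans hx.1
  have hexp : ContinuousOn (f ∘ exp) (Ioo (log a) (log b)) := by
    simpa only [interior_Icc] using hf.continuousOn_interior
  have hlog : ContinuousOn log (Ioo a b) := continuousOn_log.mono fun x hx => (hpos x hx).ne'
  have hmaps : MapsTo log (Ioo a b) (Ioo (log a) (log b)) := fun x hx =>
    ⟨log_lt_log ha hx.1, log_lt_log (hpos x hx) hx.2⟩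
  exact (hexp.comp hlog hmaps).congr fun x hx => by
    simp only [Function.comp_apply, exp_log (hpos x hx)]

theorem mul_le_logInterp_mul_logInterp_of_convexOn_comp_exp {x : ℝ} (ha : 0 < a) (hab : a < b)
    (hf0 : 0 ≤ f x) (hg0 : 0 ≤ g x)
    (hf : ConvexOn ℝ (Icc (log a) (log b)) (f ∘ exp))
    (hg : ConvexOn ℝ (Icc (log a) (log b)) (g ∘ exp)) (hx : x ∈ Icc a b) :
    f x * g x ≤ logInterp a b (f a) (f b) x * logInterp a b (g a) (g b) x := by
  have hfx := le_logInterp_of_convexOn_comp_exp ha hab hf hx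
  exact mul_le_mul hfx (le_logInterp_of_convexOn_comp_exp ha hab hg hx) hg0 (hf0.trans hfx)

theorem intervalIntegrable_mul_of_convexOn_comp_exp (ha : 0 < a) (hab : a < b)
    (hf0 : ∀ x ∈ Icc a b, 0 ≤ f x) (hg0 : ∀ x ∈ Icc a b, 0 ≤ g x)
    (hf : ConvexOn ℝ (Icc (log a) (log b)) (f ∘ exp))
    (hg : ConvexOn ℝ (Icc (log a) (log b)) (g ∘ exp)) :
    IntervalIntegrable (fun x => f x * g x) volume a b := by
  have hmeas : AEStronglyMeasurable (fun x => f x * g x) (volume.restrict (uIoc a b)) := by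
    rw [uIoc_of_le hab.le, ← restrict_Ioo_eq_restrict_Ioc]
    exact ((continuousOn_Ioo_of_convexOn_comp_exp ha hf).mul
      (continuousOn_Ioo_of_convexOn_comp_exp ha hg)).aestronglyMeasurable measurableSet_Ioo
  refine (intervalIntegrable_logInterp_mul_logInterp (notMem_uIcc_of_lt ha (ha.trans hab))
    (f a) (f b) (g a) (g b)).mono_fun' hmeas ?_
  filter_upwards [ae_restrict_mem measurableSet_uIoc] with x hx
  have hx : x ∈ Icc a b := by
    rw [uIoc_of_le hab.le] at hx
    exact Ioc_subset_Icc_self hx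
  rw [norm_of_nonneg (mul_nonneg (hf0 x hx) (hg0 x hx))]
  exact mul_le_logInterp_mul_logInterp_of_convexOn_comp_exp ha hab (hf0 x hx) (hg0 x hx) hf hg hx

end ConvexOnCompExp

theorem GAConvexOn.convexOn_comp_exp {h : ℝ → ℝ} {c : ℝ} (hc : 0 < c) (hh : GAConvexOn 1 1 c h) :
    ConvexOn ℝ (Iic (log c)) (h ∘ exp) := by
  refine ⟨convex_Iic _, fun u hu v hv s t hs ht hst => ?_⟩
  have hmem : ∀ w ∈ Iic (log c), exp w ∈ Icc 0 c := fun w hw =>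
    ⟨(exp_pos w).le, (le_log_iff_exp_le hc).1 hw⟩
  have hGA := hh (exp u) (hmem u hu) (exp v) (hmem v hv) s ⟨hs, by linarith⟩
  have ht' : 1 - s = t := by linarith
  simpa only [Function.comp_apply, smul_eq_mul, one_mul, rpow_one, ht', ← exp_mul, ← exp_add,
    mul_comm u, mul_comm v] using hGA

theorem stmt_14_general (f g : ℝ → ℝ) (a b : ℝ) (ha : 0 < a) (hab : a < b)
    (hf0 : ∀ x ∈ Icc a b, 0 ≤ f x) (hg0 : ∀ x ∈ Icc a b, 0 ≤ g x)
    (hf : ConvexOn ℝ (Icc (log a) (log b)) (f ∘ exp))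
    (hg : ConvexOn ℝ (Icc (log a) (log b)) (g ∘ exp)) :
    ∫ x in a..b, f x * g x ≤
      (1 / (log b - log a)) *
        ((2 * L a b - a * (log b - log a) - 2 * a) * f a * g a +
          (a + b - 2 * L a b) * (f a * g b + f b * g a) +
          (2 * L a b + b * (log b - log a) - 2 * b) * f b * g b) := by
  have h0 : (0 : ℝ) ∉ uIcc a b := notMem_uIcc_of_lt ha (ha.trans hab)
  have hbound : ∀ x ∈ Icc a b,
      f x * g x ≤ logInterp a b (f a) (f b) x * logInterp a b (g a) (g b) x := fun x hx =>
    mul_le_logInterp_mul_logInterp_of_convexOn_comp_exp ha hab (hf0 x hx) (hg0 x hx) hf hg hx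
  calc ∫ x in a..b, f x * g x
      ≤ ∫ x in a..b, logInterp a b (f a) (f b) x * logInterp a b (g a) (g b) x :=
        intervalIntegral.integral_mono_on hab.le
          (intervalIntegrable_mul_of_convexOn_comp_exp ha hab hf0 hg0 hf hg)
          (intervalIntegrable_logInterp_mul_logInterp h0 ..) hbound
    _ = _ := integral_logInterp_mul_logInterp h0 (log_lt_log ha hab).ne ..

theorem stmt_14 (f g : ℝ → ℝ) (a b : ℝ) (ha : 0 < a) (hab : a < b)
    (hf0 : ∀ x ∈ Ici (0:ℝ), 0 ≤ f x) (hg0 : ∀ x ∈ Ici (0:ℝ), 0 ≤ g x)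
    (hfg : IntervalIntegrable (fun x => f x * g x) volume a b)
    (hfconv : GAConvexOn 1 1 b f) (hgconv : GAConvexOn 1 1 b g) :
    ∫ x in a..b, f x * g x ≤
      (1 / (Real.log b - Real.log a)) *
        ((2 * L a b - a * (Real.log b - Real.log a) - 2 * a) * f a * g a +
          (a + b - 2 * L a b) * (f a * g b + f b * g a) +
          (2 * L a b + b * (Real.log b - Real.log a) - 2 * b) * f b * g b) := by
  have hb : 0 < b := ha.trans hab
  exact stmt_14_general f g a b ha hab
    (fun x hx => hf0 x (ha.le.trans hx.1)) (fun x hx => hg0 x (ha.le.trans hx.1))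
    ((hfconv.convexOn_comp_exp hb).subset Icc_subset_Iic_self (convex_Icc _ _))
    ((hgconv.convexOn_comp_exp hb).subset Icc_subset_Iic_self (convex_Icc _ _))
end

section
/- Let f, g : [0,∞) → [0,∞) with f·g Lebesgue integrable on [a,b], where 0 < a < b < ∞. Let (α₁,m₁), (α₂,m₂) ∈ (0,1]². If f is (α₁,m₁)-GA-concave on [0, max{a^{1/m₁}, b}] and g is (α₂,m₂)-GA-concave on [0, max{a^{1/m₂}, b}], then ∫_a^b f(x)·g(x) dx ≥ (ln b − ln a) · { m₁·m₂·[L(a,b) − G(α₁,1) − G(α₂,1) + G(α₁+α₂,1)]·f(a^{1/m₁})·g(a^{1/m₂}) + m₁·[G(α₂,1) − G(α₁+α₂,1)]·f(a^{1/m₁})·g(b) + m₂·[G(α₁,1) − G(α₁+α₂,1)]·f(b)·g(a^{1/m₂}) + G(α₁+α₂,1)·f(b)·g(b) }. -/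
open Real MeasureTheory Set

/-!
The geometric path `t ↦ a ^ (1 - t) * b ^ t` runs from `a` to `b`, and its derivative is
`log b - log a` times itself. Substituting along it turns `∫ x in a..b, f x * g x` into an integral
over `[0, 1]`, where GA-concavity, applied to `b` and `a ^ (1 / m)`, bounds each factor from below
by an affine function of `t ^ α`. Expanding the product of the two bounds leaves only the moments
`∫ t ^ γ * (a ^ (1 - t) * b ^ t)`: these are `L a b` for `γ = 0` and `G a b γ 1` in general.
-/

/-- The weighted geometric mean `a ^ (1 - t) * b ^ t`, seen as a path in `t` from `a` to `b`; it
parametrizes the integration variable. -/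
noncomputable def weightedGeomMean (a b t : ℝ) : ℝ := a ^ (1 - t) * b ^ t

/-- The lower bound that `(α, m)`-GA-concavity gives for `h (x ^ t * y ^ (m * (1 - t)))`, with `u`
in place of `h x` and `v` in place of `h y`. -/
noncomputable def gaChord (α m u v t : ℝ) : ℝ := t ^ α * u + m * (1 - t ^ α) * v

section WeightedGeomMean

variable {a b : ℝ}

lemma weightedGeomMean_zero : weightedGeomMean a b 0 = a := by simp [weightedGeomMean]

lemma weightedGeomMean_one : weightedGeomMean a b 1 = b := by simp [weightedGeomMean]

lemma weightedGeomMean_pos (ha : 0 < a) (hb : 0 < b) (t : ℝ) : 0 < weightedGeomMean a b t :=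
  mul_pos (rpow_pos_of_pos ha _) (rpow_pos_of_pos hb _)

lemma weightedGeomMean_le_right (ha : 0 ≤ a) (hb : 0 < b) (hab : a ≤ b) {t : ℝ} (ht : t ≤ 1) :
    weightedGeomMean a b t ≤ b :=
  calc a ^ (1 - t) * b ^ t ≤ b ^ (1 - t) * b ^ t :=
        mul_le_mul_of_nonneg_right (rpow_le_rpow ha hab (sub_nonneg.2 ht))
          (rpow_nonneg hb.le t)
    _ = b := by rw [← rpow_add hb, sub_add_cancel, rpow_one]

lemma hasDerivAt_weightedGeomMean (ha : 0 < a) (hb : 0 < b) (t : ℝ) :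
    HasDerivAt (weightedGeomMean a b) ((log b - log a) * weightedGeomMean a b t) t := by
  have hderiv : HasDerivAt (weightedGeomMean a b) _ t :=
    (((hasDerivAt_id t).const_sub 1).const_rpow ha).mul ((hasDerivAt_id t).const_rpow hb)
  refine hderiv.congr_deriv ?_
  simp only [weightedGeomMean, id_eq]
  ring

lemma continuous_weightedGeomMean (ha : 0 < a) (hb : 0 < b) : Continuous (weightedGeomMean a b) :=
  continuous_iff_continuousAt.2 fun t => (hasDerivAt_weightedGeomMean ha hb t).continuousAt

variable {E : Type*} [NormedAddCommGroup E] [NormedSpace ℝ E]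

lemma integral_smul_comp_weightedGeomMean (ha : 0 < a) (hb : 0 < b) (F : ℝ → E) :
    ∫ t in (0 : ℝ)..1, ((log b - log a) * weightedGeomMean a b t) • F (weightedGeomMean a b t) =
      ∫ x in a..b, F x := by
  have hcont := (continuous_weightedGeomMean ha hb).continuousOn (s := uIcc 0 1)
  have hderiv := fun t (_ : t ∈ Ioo (min (0 : ℝ) 1) (max 0 1)) =>
    hasDerivAt_weightedGeomMean ha hb t
  have hnonneg := fun t => (weightedGeomMean_pos ha hb t).le
  trans ∫ x in weightedGeomMean a b 0..weightedGeomMean a b 1, F x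
  · rcases le_total a b with hab | hba
    · exact intervalIntegral.integral_deriv_smul_comp_of_deriv_nonneg hcont hderiv
        fun t _ => mul_nonneg (sub_nonneg.2 (log_le_log ha hab)) (hnonneg t)
    · exact intervalIntegral.integral_deriv_smul_comp_of_deriv_nonpos hcont hderiv
        fun t _ => mul_nonpos_of_nonpos_of_nonneg (sub_nonpos.2 (log_le_log hb hba)) (hnonneg t)
  · rw [weightedGeomMean_zero, weightedGeomMean_one]

lemma intervalIntegrable_smul_comp_weightedGeomMean_iff (ha : 0 < a) (hb : 0 < b) {F : ℝ → E} :
    IntervalIntegrable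
        (fun t => ((log b - log a) * weightedGeomMean a b t) • F (weightedGeomMean a b t))
        volume 0 1 ↔
      IntervalIntegrable F volume a b := by
  have hcont := (continuous_weightedGeomMean ha hb).continuousOn (s := uIcc 0 1)
  have hderiv := fun t (_ : t ∈ Ioo (min (0 : ℝ) 1) (max 0 1)) =>
    hasDerivAt_weightedGeomMean ha hb t
  have hnonneg := fun t => (weightedGeomMean_pos ha hb t).le
  trans IntervalIntegrable F volume (weightedGeomMean a b 0) (weightedGeomMean a b 1)
  · rcases le_total a b with hab | hba
    · exact intervalIntegral.integrable_deriv_smul_comp_iff_of_deriv_nonneg hcont hderiv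
        fun t _ => mul_nonneg (sub_nonneg.2 (log_le_log ha hab)) (hnonneg t)
    · exact intervalIntegral.integrable_deriv_smul_comp_iff_of_deriv_nonpos hcont hderiv
        fun t _ => mul_nonpos_of_nonpos_of_nonneg (sub_nonpos.2 (log_le_log hb hba)) (hnonneg t)
  · rw [weightedGeomMean_zero, weightedGeomMean_one]

end WeightedGeomMean

lemma L_eq_integral_weightedGeomMean {a b : ℝ} (ha : 0 < a) (hb : 0 < b) (hab : a ≠ b) :
    L a b = ∫ t in (0 : ℝ)..1, weightedGeomMean a b t := by
  have hlog : log b - log a ≠ 0 := sub_ne_zero.2 fun h => hab (log_injOn_pos hb ha h).symm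
  have hsubst := integral_smul_comp_weightedGeomMean ha hb fun _ => (1 : ℝ)
  simp only [smul_eq_mul, mul_one, intervalIntegral.integral_const,
    intervalIntegral.integral_const_mul] at hsubst
  rw [L, ← hsubst, mul_div_cancel_left₀ _ hlog]

lemma G_one_eq_integral_weightedGeomMean (a b α : ℝ) :
    G a b α 1 = ∫ t in (0 : ℝ)..1, t ^ α * weightedGeomMean a b t := by
  simp only [G, weightedGeomMean, one_mul, mul_assoc]

section GAChord

variable {α m : ℝ}

lemma continuous_gaChord (hα : 0 ≤ α) (u v : ℝ) : Continuous (gaChord α m u v) :=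
  have hpow : Continuous fun t : ℝ => t ^ α := continuous_rpow_const hα
  (hpow.mul_const u).add (((continuous_const.sub hpow).const_mul m).mul_const v)

lemma gaChord_nonneg {u v t : ℝ} (hα : 0 ≤ α) (hm : 0 ≤ m) (hu : 0 ≤ u) (hv : 0 ≤ v)
    (ht : t ∈ Icc (0 : ℝ) 1) : 0 ≤ gaChord α m u v t :=
  add_nonneg (mul_nonneg (rpow_nonneg ht.1 α) hu)
    (mul_nonneg (mul_nonneg hm (sub_nonneg.2 (rpow_le_one ht.1 ht.2 hα))) hv)

lemma GAConcaveOn.gaChord_le {c a b : ℝ} {h : ℝ → ℝ} (hh : GAConcaveOn α m c h) (hm : m ≠ 0)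
    (ha : 0 ≤ a) (hac : a ^ (1 / m) ≤ c) (hb : b ∈ Icc 0 c) {t : ℝ} (ht : t ∈ Icc (0 : ℝ) 1) :
    gaChord α m (h b) (h (a ^ (1 / m))) t ≤ h (weightedGeomMean a b t) := by
  have hpath : b ^ t * (a ^ (1 / m)) ^ (m * (1 - t)) = weightedGeomMean a b t := by
    rw [← rpow_mul ha, ← mul_assoc, one_div_mul_cancel hm, one_mul, mul_comm, weightedGeomMean]
  exact hpath ▸ hh b hb _ ⟨rpow_nonneg ha _, hac⟩ t ht

lemma GAConcaveOn.gaChord_mul_gaChord_le {f g : ℝ → ℝ} {a b α₁ m₁ c₁ α₂ m₂ c₂ t : ℝ}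
    (hf : GAConcaveOn α₁ m₁ c₁ f) (hg : GAConcaveOn α₂ m₂ c₂ g)
    (hf0 : ∀ x ∈ Icc 0 c₁, 0 ≤ f x) (hg0 : ∀ x ∈ Icc 0 c₂, 0 ≤ g x)
    (hm₁ : m₁ ≠ 0) (hα₂ : 0 ≤ α₂) (hm₂ : 0 < m₂) (ha : 0 < a) (hab : a ≤ b)
    (hac₁ : a ^ (1 / m₁) ≤ c₁) (hbc₁ : b ≤ c₁) (hac₂ : a ^ (1 / m₂) ≤ c₂) (hbc₂ : b ≤ c₂)
    (ht : t ∈ Icc (0 : ℝ) 1) :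
    gaChord α₁ m₁ (f b) (f (a ^ (1 / m₁))) t * gaChord α₂ m₂ (g b) (g (a ^ (1 / m₂))) t ≤
      f (weightedGeomMean a b t) * g (weightedGeomMean a b t) := by
  have hb : 0 < b := ha.trans_le hab
  have hf_path : 0 ≤ f (weightedGeomMean a b t) :=
    hf0 _ ⟨(weightedGeomMean_pos ha hb t).le,
      (weightedGeomMean_le_right ha.le hb hab ht.2).trans hbc₁⟩
  have hg_chord : 0 ≤ gaChord α₂ m₂ (g b) (g (a ^ (1 / m₂))) t :=
    gaChord_nonneg hα₂ hm₂.le (hg0 b ⟨hb.le, hbc₂⟩) (hg0 _ ⟨rpow_nonneg ha.le _, hac₂⟩) ht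
  exact mul_le_mul (hf.gaChord_le hm₁ ha.le hac₁ ⟨hb.le, hbc₁⟩ ht)
    (hg.gaChord_le hm₂.ne' ha.le hac₂ ⟨hb.le, hbc₂⟩ ht) hg_chord hf_path

lemma integral_gaChord_mul {w : ℝ → ℝ} {c d : ℝ} (hα : 0 ≤ α) (m u v : ℝ)
    (hw : IntervalIntegrable w volume c d) :
    ∫ t in c..d, gaChord α m u v t * w t =
      u * (∫ t in c..d, t ^ α * w t) + m * v * ((∫ t in c..d, w t) - ∫ t in c..d, t ^ α * w t) := by
  have hmoment : IntervalIntegrable (fun t => t ^ α * w t) volume c d :=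
    hw.continuousOn_mul (continuous_rpow_const hα).continuousOn
  rw [← intervalIntegral.integral_sub hw hmoment, ← intervalIntegral.integral_const_mul,
    ← intervalIntegral.integral_const_mul,
    ← intervalIntegral.integral_add (hmoment.const_mul _) ((hw.sub hmoment).const_mul _)]
  refine intervalIntegral.integral_congr fun t _ => ?_
  simp only [gaChord]
  ring

lemma integral_gaChord_mul_gaChord_mul {α₁ α₂ c d : ℝ} {w : ℝ → ℝ} (hα₁ : 0 ≤ α₁) (hα₂ : 0 ≤ α₂)
    (hc : 0 ≤ c) (hd : 0 ≤ d) (m₁ m₂ u₁ v₁ u₂ v₂ : ℝ) (hw : IntervalIntegrable w volume c d) :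
    ∫ t in c..d, gaChord α₁ m₁ u₁ v₁ t * (gaChord α₂ m₂ u₂ v₂ t * w t) =
      m₁ * m₂ * ((∫ t in c..d, w t) - (∫ t in c..d, t ^ α₁ * w t) -
          (∫ t in c..d, t ^ α₂ * w t) + ∫ t in c..d, t ^ (α₁ + α₂) * w t) * v₁ * v₂ +
        m₁ * ((∫ t in c..d, t ^ α₂ * w t) - ∫ t in c..d, t ^ (α₁ + α₂) * w t) *
          v₁ * u₂ +
        m₂ * ((∫ t in c..d, t ^ α₁ * w t) - ∫ t in c..d, t ^ (α₁ + α₂) * w t) *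
          u₁ * v₂ +
        (∫ t in c..d, t ^ (α₁ + α₂) * w t) * u₁ * u₂ := by
  have hmoment : IntervalIntegrable (fun t => t ^ α₁ * w t) volume c d :=
    hw.continuousOn_mul (continuous_rpow_const hα₁).continuousOn
  have hpow_add : ∫ t in c..d, t ^ α₂ * (t ^ α₁ * w t) =
      ∫ t in c..d, t ^ (α₁ + α₂) * w t :=
    intervalIntegral.integral_congr fun t ht => by
      simp only [rpow_add_of_nonneg ((le_min hc hd).trans ht.1) hα₁ hα₂]
      ring
  rw [integral_gaChord_mul hα₁ _ _ _
      (hw.continuousOn_mul (continuous_gaChord hα₂ u₂ v₂).continuousOn)]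
  simp only [mul_left_comm (_ ^ α₁) (gaChord _ _ _ _ _)]
  rw [integral_gaChord_mul hα₂ _ _ _ hw, integral_gaChord_mul hα₂ _ _ _ hmoment, hpow_add]
  ring

end GAChord

theorem stmt_18_general (f g : ℝ → ℝ) (a b α₁ m₁ α₂ m₂ : ℝ) (ha : 0 < a) (hab : a < b)
    (hα₁ : 0 ≤ α₁) (hm₁ : 0 < m₁) (hα₂ : 0 ≤ α₂) (hm₂ : 0 < m₂)
    (hf0 : ∀ x ∈ Icc 0 (max (a ^ (1 / m₁)) b), 0 ≤ f x)
    (hg0 : ∀ x ∈ Icc 0 (max (a ^ (1 / m₂)) b), 0 ≤ g x)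
    (hfg : IntervalIntegrable (fun x => f x * g x) volume a b)
    (hfconc : GAConcaveOn α₁ m₁ (max (a ^ (1 / m₁)) b) f)
    (hgconc : GAConcaveOn α₂ m₂ (max (a ^ (1 / m₂)) b) g) :
    (Real.log b - Real.log a) *
        (m₁ * m₂ * (L a b - G a b α₁ 1 - G a b α₂ 1 + G a b (α₁ + α₂) 1) *
            f (a ^ (1 / m₁)) * g (a ^ (1 / m₂)) +
          m₁ * (G a b α₂ 1 - G a b (α₁ + α₂) 1) * f (a ^ (1 / m₁)) * g b +
          m₂ * (G a b α₁ 1 - G a b (α₁ + α₂) 1) * f b * g (a ^ (1 / m₂)) +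
          G a b (α₁ + α₂) 1 * f b * g b) ≤ ∫ x in a..b, f x * g x := by
  have hb : 0 < b := ha.trans hab
  have hw := continuous_weightedGeomMean ha hb
  have hchords : Continuous fun t => gaChord α₁ m₁ (f b) (f (a ^ (1 / m₁))) t *
      (gaChord α₂ m₂ (g b) (g (a ^ (1 / m₂))) t * weightedGeomMean a b t) :=
    (continuous_gaChord hα₁ _ _).mul ((continuous_gaChord hα₂ _ _).mul hw)
  rw [L_eq_integral_weightedGeomMean ha hb hab.ne]
  simp only [G_one_eq_integral_weightedGeomMean]
  rw [← integral_gaChord_mul_gaChord_mul hα₁ hα₂ le_rfl zero_le_one _ _ _ _ _ _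
      (hw.intervalIntegrable 0 1),
    ← intervalIntegral.integral_const_mul, ← integral_smul_comp_weightedGeomMean ha hb]
  refine intervalIntegral.integral_mono_on zero_le_one
    ((hchords.const_mul _).intervalIntegrable 0 1)
    ((intervalIntegrable_smul_comp_weightedGeomMean_iff ha hb).2 hfg) fun t ht => ?_
  rw [← mul_assoc (gaChord _ _ _ _ _), mul_comm _ (weightedGeomMean a b t), ← mul_assoc]
  exact mul_le_mul_of_nonneg_left
    (hfconc.gaChord_mul_gaChord_le hgconc hf0 hg0 hm₁.ne' hα₂ hm₂ ha hab.le
      (le_max_left _ _) (le_max_right _ _) (le_max_left _ _) (le_max_right _ _) ht)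
    (mul_nonneg (sub_nonneg.2 (log_le_log ha hab.le)) (weightedGeomMean_pos ha hb t).le)

theorem stmt_18 (f g : ℝ → ℝ) (a b α₁ m₁ α₂ m₂ : ℝ) (ha : 0 < a) (hab : a < b)
    (hα₁ : α₁ ∈ Ioc (0:ℝ) 1) (hm₁ : m₁ ∈ Ioc (0:ℝ) 1)
    (hα₂ : α₂ ∈ Ioc (0:ℝ) 1) (hm₂ : m₂ ∈ Ioc (0:ℝ) 1)
    (hf0 : ∀ x ∈ Ici (0:ℝ), 0 ≤ f x) (hg0 : ∀ x ∈ Ici (0:ℝ), 0 ≤ g x)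
    (hfg : IntervalIntegrable (fun x => f x * g x) volume a b)
    (hfconc : GAConcaveOn α₁ m₁ (max (a ^ (1/m₁)) b) f)
    (hgconc : GAConcaveOn α₂ m₂ (max (a ^ (1/m₂)) b) g) :
    (Real.log b - Real.log a) *
        (m₁ * m₂ * (L a b - G a b α₁ 1 - G a b α₂ 1 + G a b (α₁ + α₂) 1) *
            f (a ^ (1/m₁)) * g (a ^ (1/m₂)) +
          m₁ * (G a b α₂ 1 - G a b (α₁ + α₂) 1) * f (a ^ (1/m₁)) * g b +
          m₂ * (G a b α₁ 1 - G a b (α₁ + α₂) 1) * f b * g (a ^ (1/m₂)) +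
          G a b (α₁ + α₂) 1 * f b * g b) ≤ ∫ x in a..b, f x * g x :=
  stmt_18_general f g a b α₁ m₁ α₂ m₂ ha hab hα₁.1.le hm₁.1 hα₂.1.le hm₂.1
    (fun x hx => hf0 x hx.1) (fun x hx => hg0 x hx.1) hfg hfconc hgconc
end
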